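/- For every real b with 1/2 ≤ b < 1: the denominators 2+ξ−1/b and 2+ξ−1/F(b) are positive, F(b) > 1, 1/2 < F(F(b)) < 1, and the exact identity 1 − F(F(b)) = (1 − b) / (ξ·(2+ξ)·b + 1) holds; consequently 1 − F(F(b)) ≤ (1 − b) / (ξ·(1+ξ/2) + 1). -/

import Mathlib

/-- The map `F(b) = (1+ξ)/(2+ξ−1/b)`. -/
noncomputable def F (ξ b : ℝ) : ℝ := (1 + ξ) / (2 + ξ - 1 / b)

/-- For `1/2 ≤ b < 1`: the denominators occurring in `F b` and `F (F b)` are positive,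
`F b > 1`, `1/2 < F (F b) < 1`, the exact identity
`1 − F(F(b)) = (1 − b)/(ξ·(2+ξ)·b + 1)` holds, and consequently
`1 − F(F(b)) ≤ (1 − b)/(ξ·(1+ξ/2) + 1)`. -/
theorem F_iterate_lower (ξ : ℝ) (hξ : 0 < ξ) (b : ℝ) (hb1 : 1 / 2 ≤ b) (hb2 : b < 1) :
    0 < 2 + ξ - 1 / b ∧
    0 < 2 + ξ - 1 / F ξ b ∧
    1 < F ξ b ∧
    1 / 2 < F ξ (F ξ b) ∧
    F ξ (F ξ b) < 1 ∧
    1 - F ξ (F ξ b) = (1 - b) / (ξ * (2 + ξ) * b + 1) ∧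
    1 - F ξ (F ξ b) ≤ (1 - b) / (ξ * (1 + ξ / 2) + 1) := by
  have hb : 0 < b := by linarith
  have hE : 0 < (2 + ξ) * b - 1 := by nlinarith [mul_pos hξ hb]
  have hD : 0 < ξ * (2 + ξ) * b + 1 := by positivity
  have h1 : 2 + ξ - 1 / b = ((2 + ξ) * b - 1) / b := by field_simp
  have hF : F ξ b = (1 + ξ) * b / ((2 + ξ) * b - 1) := by
    unfold F
    rw [h1, div_div_eq_mul_div]
  have h2 : 2 + ξ - 1 / F ξ b = (ξ * (2 + ξ) * b + 1) / ((1 + ξ) * b) := by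
    rw [hF, one_div_div, eq_div_iff (by positivity), sub_mul, div_mul_cancel₀ _ (by positivity)]
    ring
  have hFF : F ξ (F ξ b) = (1 + ξ) * ((1 + ξ) * b) / (ξ * (2 + ξ) * b + 1) := by
    rw [F, h2, div_div_eq_mul_div]
  have hid : 1 - F ξ (F ξ b) = (1 - b) / (ξ * (2 + ξ) * b + 1) := by
    rw [hFF, eq_div_iff hD.ne', sub_mul, div_mul_cancel₀ _ hD.ne']
    ring
  have hp : 0 < ξ * (2 + ξ) := by positivity
  refine ⟨?_, ?_, ?_, ?_, ?_, hid, ?_⟩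
  · rw [h1]; positivity
  · rw [h2]; positivity
  · rw [hF, lt_div_iff₀ hE]; nlinarith
  · rw [hFF, lt_div_iff₀ hD]; nlinarith [mul_pos hp hb]
  · have : 0 < (1 - b) / (ξ * (2 + ξ) * b + 1) := div_pos (by linarith) hD
    linarith
  · rw [hid]
    apply div_le_div_of_nonneg_left (by linarith) (by positivity)
    nlinarith
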